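/- Let 0 < γ < 2 and β ∈ [0, π/2]. Suppose (x_n), n ≥ 0, is a sequence of complex numbers satisfying the discrete Painlevé equation (P) with parameter γ for all n ≥ 0, with x_0 = e^{iβ}, and suppose every x_n lies in the closed arc A_I = {e^{iθ} : θ ∈ [0, π/2]}. Then β = γπ/4. -/

import Mathlib

open Complex

noncomputable section

/-- The discrete Painlevé equation (P) with parameter `γ`: for `n = 0` the second
term on the left-hand side is absent (its coefficient `n` vanishes); all occurring
denominators are required to be nonzero. -/
def PainleveP (γ : ℂ) (x : ℕ → ℂ) : Prop :=
  ∀ n : ℕ,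
    (Complex.I + x n * x (n+1) ≠ 0) ∧
    (n ≠ 0 → Complex.I + x (n-1) * x n ≠ 0) ∧
    ((n : ℂ) + 1) * (x n ^ 2 - 1) * ((x (n+1) - Complex.I * x n) / (Complex.I + x n * x (n+1))) -
      (n : ℂ) * (x n ^ 2 + 1) * ((x (n-1) + Complex.I * x n) / (Complex.I + x (n-1) * x n)) =
    γ * x n

theorem pv_key (c S k K n s Z W G : ℂ) (h1 : c^2+S^2=1)
  (hP : S*((n+1)*(S+c*K)) - c*(n*(c-S*k)) = G/2) :
  (1+s^2)*s*(((S*Z+1)*(Z+S+s*c)-((c+s*S)*Z+s)*c)+c*S*(1+s^2)*W)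
   -(s*(n*(c-S*k)*s-n*(c*k+S))*(Z+S+s*c)^2+(G/2*(1+s^2)+2*n*k*s)*((c+s*S)*Z+s)*(Z+S+s*c)
    +(n*(c-S*k)-n*(c*k+S)*s)*((c+s*S)*Z+s)^2)
  = c*S*(1+s^2)*((1+s^2)*s*W-(s*((n+1)*(S+c*K)*s-(n+1)*(c-S*K))+(G/2*(1+s^2)+2*(n+1)*K*s)*Z
    +((n+1)*(S+c*K)-(n+1)*(c-S*K)*s)*Z^2)) := by
  obtain rfl : G = 2*(S*((n+1)*(S+c*K)) - c*(n*(c-S*k))) := by rw [hP]; ring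
  clear hP
  grind

def pvT (c S : ℝ) (s Z : ℂ) : ℂ := ((c+s*S)*Z+s)/(Z+S+s*c)

def pvF (c S : ℕ → ℝ) : ℕ → ℕ → ℂ → ℂ
  | 0, _, _ => 1
  | k+1, m, s => pvT (c m) (S m) s (pvF c S k (m+1) s)

def pvE (c S : ℕ → ℝ) (κ : ℕ → ℂ) (G : ℂ) (m : ℕ) (s Z W : ℂ) : ℂ :=
  (1+s^2)*s*W - (s*(m*(c m - S m * κ (m-1))*s - m*(c m*κ (m-1) + S m))
    + (G/2*(1+s^2)+2*m*κ (m-1)*s)*Z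
    + (m*(c m - S m * κ (m-1)) - m*(c m*κ (m-1) + S m)*s)*Z^2)

def pvCone (s Z : ℂ) : Prop := ‖Z‖ = 1 ∧ ∃ a b : ℝ, 0 ≤ a ∧ 0 ≤ b ∧ Z = a + b*s

theorem pv_den {c S : ℝ} (hc : 0 ≤ c) (hS : 0 ≤ S) (h1 : c^2+S^2=1) {s Z : ℂ}
    (hs : ‖s‖ = 1) (hre : 0 ≤ s.re) (hZ : pvCone s Z) : 2 ≤ ‖Z+S+s*c‖^2 := by
  obtain ⟨hn, a, b, ha, hb, rfl⟩ := hZ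
  have e1 : s.re^2+s.im^2 = 1 := by
    have := Complex.sq_norm s
    rw [hs, Complex.normSq_apply] at this; nlinarith
  have e2 := Complex.sq_norm ((a:ℂ)+b*s)
  rw [hn, Complex.normSq_apply] at e2
  rw [Complex.sq_norm, Complex.normSq_apply]
  simp at e2 ⊢
  have : 0 ≤ a*S + a*c*s.re + b*S*s.re+b*c+S*c*s.re := by positivity
  have t1 : c^2*(s.re^2+s.im^2) = c^2 := by rw [e1, mul_one]
  have t2 : b*c*(s.re^2+s.im^2) = b*c := by rw [e1, mul_one]
  linarith

theorem pv_cone {c S : ℝ} (hc : 0 ≤ c) (hS : 0 ≤ S) (h1 : c^2+S^2=1) {s Z : ℂ}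
    (hs : ‖s‖ = 1) (hre : 0 ≤ s.re) (hZ : pvCone s Z) : pvCone s (pvT c S s Z) := by
  have hd := pv_den hc hS h1 hs hre hZ
  have hd0 : Z+S+s*c ≠ 0 := by
    intro h; rw [h] at hd; norm_num at hd
  have hss : s * (starRingEnd ℂ) s = 1 := by
    rw [Complex.mul_conj, Complex.normSq_eq_norm_sq, hs]; simp
  have hZZ : Z * (starRingEnd ℂ) Z = 1 := by
    rw [Complex.mul_conj, Complex.normSq_eq_norm_sq, hZ.1]; simp
  have hnum : (c+s*S)*Z+s = s*Z*(starRingEnd ℂ) (Z+S+s*c) := by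
    simp only [map_add, map_mul, Complex.conj_ofReal]
    linear_combination (-s)*hZZ - Z*c*hss
  refine ⟨?_, ?_⟩
  · rw [pvT, hnum, norm_div, norm_mul, norm_mul, Complex.norm_conj, hs, hZ.1]
    have : ‖Z+S+s*c‖ ≠ 0 := by simpa using hd0
    field_simp
  · obtain ⟨hn, a, b, ha, hb, hab⟩ := hZ
    set D := Z+S+s*c with hD
    have hsr : s + (starRingEnd ℂ) s = ((2*s.re : ℝ) : ℂ) := by
      rw [Complex.add_conj]
    refine ⟨(2*c + 2*b*c^2+2*c*S*a+2*a*c^2*s.re)/‖D‖^2,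
      (2*S+2*c*S*b+2*S^2*a+2*b*S^2*s.re)/‖D‖^2, by positivity, by positivity, ?_⟩
    have hDD : D * (starRingEnd ℂ) D = ((‖D‖^2 : ℝ):ℂ) := by
      rw [Complex.mul_conj, Complex.normSq_eq_norm_sq]
    have hDn : ((‖D‖^2 : ℝ):ℂ) ≠ 0 := by
      rw [← hDD]; exact mul_ne_zero hd0 (by simpa using hd0)
    have h1' : (c:ℂ)^2+(S:ℂ)^2 = 1 := by exact_mod_cast h1
    rw [pvT, ← hD, div_eq_iff hd0]
    have h2 : ((c+s*S)*Z+s) * (starRingEnd ℂ) D =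
       ((2*c + 2*b*c^2+2*c*S*a+2*a*c^2*s.re : ℝ):ℂ) +
        ((2*S+2*c*S*b+2*S^2*a+2*b*S^2*s.re : ℝ):ℂ) * s := by
      have hcD : (starRingEnd ℂ) D = a + b*(starRingEnd ℂ) s + S + (starRingEnd ℂ) s * c := by
        simp [hD, hab]
      push_cast at hsr ⊢
      have hsre : (s.re:ℂ) = (s + (starRingEnd ℂ) s)/2 := by rw [hsr]; ring
      rw [hab] at hZZ
      simp only [map_add, map_mul, Complex.conj_ofReal] at hZZ
      rw [hcD, hsre, hab]
      generalize (starRingEnd ℂ) s = t at *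
      clear hsr hsre hcD hnum hDD hDn
      clear hd hd0 hD hn h1 hs hc hS hre ha hb
      grind
    have hcDn : (starRingEnd ℂ) D ≠ 0 := by simpa using hd0
    apply mul_right_cancel₀ hcDn
    rw [h2, mul_assoc _ D, hDD]
    have hDn' : (‖D‖ : ℂ) ≠ 0 := by
      simpa using hd0
    push_cast
    field_simp

theorem pv_step {c S : ℕ → ℝ} {κ : ℕ → ℂ} {G : ℂ}
    (hc : ∀ n, 0 ≤ c n) (hS : ∀ n, 0 ≤ S n) (h1 : ∀ n, c n^2+S n^2=1)
    (l1 : ∀ n, S n + c n * κ n = c (n+1) - S (n+1) * κ n)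
    (l2 : ∀ n, c n - S n * κ n = c (n+1) * κ n + S (n+1))
    (hP : ∀ n : ℕ, S n*((n+1)*(S n+c n*κ n)) - c n*(n*(c n-S n*κ (n-1))) = G/2)
    {s : ℂ} (hs : ‖s‖ = 1) (hre : 0 ≤ s.re) (m : ℕ) {f : ℂ → ℂ} {W : ℂ}
    (hf : HasDerivAt f W s) (hZ : pvCone s (f s)) :
    ∃ W', HasDerivAt (fun s => pvT (c m) (S m) s (f s)) W' s ∧
      ‖pvE c S κ G m s (pvT (c m) (S m) s (f s)) W'‖ ≤
        ‖1+s^2‖ / 4 * ‖pvE c S κ G (m+1) s (f s) W‖ := by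
  have hd := pv_den (hc m) (hS m) (h1 m) hs hre hZ
  have hd0 : f s+S m+s*c m ≠ 0 := by
    intro h; rw [h] at hd; norm_num at hd
  have hd1 : HasDerivAt (fun s : ℂ => ((c m + s * S m) * f s + s)) 
      ((S m) * f s + (c m + s * S m) * W + 1) s := by
    have := ((((hasDerivAt_id s).mul_const (S m:ℂ)).const_add (c m:ℂ)).mul hf).add (hasDerivAt_id s)
    refine HasDerivAt.congr_deriv this ?_
    simp
  have hd2 : HasDerivAt (fun s : ℂ => (f s + S m + s * c m)) (W + c m) s := by
    have := (hf.add_const (S m:ℂ)).add ((hasDerivAt_id s).mul_const (c m:ℂ))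
    refine HasDerivAt.congr_deriv this ?_
    simp
  have hd3 := hd1.div hd2 hd0
  refine ⟨_, hd3, ?_⟩
  have h1' : (c m:ℂ)^2+(S m:ℂ)^2 = 1 := by exact_mod_cast h1 m
  have key := pv_key (c m) (S m) (κ (m-1)) (κ m) m s (f s) W G h1' (hP m)
  have : pvE c S κ G m s (pvT (c m) (S m) s (f s)) ((((S m) * f s + (c m + s * S m) * W + 1) * (f s + S m + s * c m) - ((c m + s * S m) * f s + s) * (W + c m)) / (f s + S m + s * c m)^2)
     = (c m * S m) * (1+s^2) / (f s + S m + s * c m)^2 * pvE c S κ G (m+1) s (f s) W := by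
    have l1m := l1 m
    have l2m := l2 m
    simp only [pvE, Nat.add_sub_cancel, Nat.cast_add, Nat.cast_one, ← l1m, ← l2m, pvT]
    generalize f s = Z at *
    have e1 : ∀ X : ℂ, (c m * S m) * (1+s^2) / (Z + S m + s * c m)^2 * X = ((c m * S m) * (1+s^2) * X) / (Z + S m + s * c m)^2 := by intro X; ring
    rw [e1, eq_div_iff (pow_ne_zero 2 hd0), ← key]
    have hN : ∀ N : ℂ, ∃ t, N / (Z + S m + s * c m) = t ∧ N = t * (Z + S m + s * c m) := by
      intro N; exact ⟨_, rfl, by field_simp⟩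
    have hW : ((((S m) * Z + (c m + s * S m) * W + 1) * (Z + S m + s * c m) - ((c m + s * S m) * Z + s) * (W + c m)) / (Z + S m + s * c m)^2) * (Z + S m + s * c m)^2 = ((S m*Z+1)*(Z+S m+s*c m)-((c m+s*S m)*Z+s)*c m)+c m*S m*(1+s^2)*W := by
      rw [div_mul_cancel₀ _ (pow_ne_zero 2 hd0)]
      linear_combination W * s * h1'
    obtain ⟨t, ht, hN⟩ := hN ((c m + s * S m) * Z + s)
    rw [ht, ← hW]
    rw [hN]
    ring
  rw [this, norm_mul, norm_div, norm_mul, norm_pow]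
  have hcs : ‖(c m : ℂ) * S m‖ ≤ 1/2 := by
    rw [← Complex.ofReal_mul, Complex.norm_real, Real.norm_of_nonneg (mul_nonneg (hc m) (hS m))]
    nlinarith [h1 m, sq_nonneg (c m - S m)]
  apply mul_le_mul_of_nonneg_right _ (norm_nonneg _)
  rw [div_le_iff₀ (by linarith)]
  have := norm_nonneg (1+s^2)
  nlinarith [mul_le_mul_of_nonneg_right hcs this]

theorem pv_main {c S : ℕ → ℝ} {κ : ℕ → ℂ} {G : ℂ}
    (hc : ∀ n, 0 ≤ c n) (hS : ∀ n, 0 ≤ S n) (h1 : ∀ n, c n^2+S n^2=1)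
    (l1 : ∀ n, S n + c n * κ n = c (n+1) - S (n+1) * κ n)
    (l2 : ∀ n, c n - S n * κ n = c (n+1) * κ n + S (n+1))
    (hκ : ∀ n, ‖κ n‖ ≤ 1) (hG : ‖G‖ ≤ 2)
    (hP : ∀ n : ℕ, S n*((n+1)*(S n+c n*κ n)) - c n*(n*(c n-S n*κ (n-1))) = G/2)
    {s : ℂ} (hs : ‖s‖ = 1) (hre : 0 ≤ s.re) (k : ℕ) : ∀ m : ℕ, pvCone s (pvF c S k m s) ∧
      ∃ W, HasDerivAt (pvF c S k m) W s ∧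
      ‖pvE c S κ G m s (pvF c S k m s) W‖ ≤ (10*(m+k)+2) / 2^k := by
  have hs2 : ‖1+s^2‖ ≤ 2 := by
    refine (norm_add_le _ _).trans ?_
    rw [norm_pow, hs]; norm_num
  induction k with
  | zero =>
    intro m
    refine ⟨⟨by simp [pvF], 1, 0, by norm_num, by norm_num, by simp [pvF]⟩, 0, hasDerivAt_const _ _, ?_⟩
    have hcn : ‖(c m:ℂ)‖ ≤ 1 := by
      rw [Complex.norm_real, Real.norm_of_nonneg (hc m)]; nlinarith [h1 m, hc m, sq_nonneg (S m)]
    have hSn : ‖(S m:ℂ)‖ ≤ 1 := by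
      rw [Complex.norm_real, Real.norm_of_nonneg (hS m)]; nlinarith [h1 m, hS m, sq_nonneg (c m)]
    have b1 : ‖(c m - S m * κ (m-1) : ℂ)‖ ≤ 2 := by
      refine (norm_sub_le _ _).trans ?_
      rw [norm_mul]
      nlinarith [hκ (m-1), norm_nonneg (κ (m-1)), norm_nonneg (S m:ℂ)]
    have b2 : ‖(c m * κ (m-1) + S m : ℂ)‖ ≤ 2 := by
      refine (norm_add_le _ _).trans ?_
      rw [norm_mul]
      nlinarith [hκ (m-1), norm_nonneg (κ (m-1)), norm_nonneg (c m:ℂ)]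
    have hm : ‖(m:ℂ)‖ = m := by simp
    have hm0 : (0:ℝ) ≤ m := by positivity
    have g1 : ‖(m*(c m - S m * κ (m-1)) : ℂ)‖ ≤ 2*m := by
      rw [norm_mul, hm]; nlinarith
    have g2 : ‖(m*(c m * κ (m-1) + S m) : ℂ)‖ ≤ 2*m := by
      rw [norm_mul, hm]; nlinarith
    have g3 : ‖(2*m*κ (m-1)*s : ℂ)‖ ≤ 2*m := by
      rw [norm_mul, norm_mul, norm_mul, hm, hs]; norm_num
      nlinarith [hκ (m-1)]
    have g4 : ‖G/2*(1+s^2)‖ ≤ 2 := by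
      rw [norm_mul, norm_div]; norm_num
      nlinarith [norm_nonneg G, norm_nonneg (1+s^2)]
    simp only [pvE, pvF]
    generalize (m*(c m - S m * κ (m-1)) : ℂ) = g at *
    generalize (m*(c m * κ (m-1) + S m) : ℂ) = e at *
    generalize (2*m*κ (m-1)*s : ℂ) = r at *
    generalize G/2*(1+s^2) = q at *
    have : (1+s^2)*s*0 - (s*(g*s-e)+(q+r)*1+(g-e*s)*1^2) = -(s*(g*s-e)+(q+r)+(g-e*s)) := by ring
    rw [this, norm_neg]
    have a1 : ‖s*(g*s-e)‖ ≤ 4*m := by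
      rw [norm_mul, hs, one_mul]
      refine (norm_sub_le _ _).trans ?_
      rw [norm_mul, hs]; linarith
    have a2 : ‖(g-e*s)‖ ≤ 4*m := by
      refine (norm_sub_le _ _).trans ?_
      rw [norm_mul, hs]; linarith
    have a3 := norm_add_le q r
    have a4 := norm_add_le (s*(g*s-e)+(q+r)) (g-e*s)
    have a5 := norm_add_le (s*(g*s-e)) (q+r)
    norm_num
    linarith
  | succ k ih =>
    intro m
    obtain ⟨hZ, W, hW, hb⟩ := ih (m+1)
    refine ⟨pv_cone (hc m) (hS m) (h1 m) hs hre hZ, ?_⟩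
    obtain ⟨W', hW', hb'⟩ := pv_step hc hS h1 l1 l2 hP hs hre m hW hZ
    refine ⟨W', hW', hb'.trans ?_⟩
    have h0 := norm_nonneg (pvE c S κ G (m+1) s (pvF c S k (m+1) s) W)
    calc _ ≤ (1/2) * ‖pvE c S κ G (m+1) s (pvF c S k (m+1) s) W‖ := by nlinarith
      _ ≤ (1/2) * ((10*((m+1:ℕ)+k)+2) / 2^k) := by linarith
      _ = _ := by push_cast; rw [pow_succ]; field_simp; ring

theorem pv_bound {c S : ℕ → ℝ} {κ : ℕ → ℂ} {γ : ℝ}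
    (hc : ∀ n, 0 ≤ c n) (hS : ∀ n, 0 ≤ S n) (h1 : ∀ n, c n^2+S n^2=1)
    (l1 : ∀ n, S n + c n * κ n = c (n+1) - S (n+1) * κ n)
    (l2 : ∀ n, c n - S n * κ n = c (n+1) * κ n + S (n+1))
    (hκ : ∀ n, ‖κ n‖ ≤ 1) (hG : ‖(γ:ℂ)‖ ≤ 2)
    (hP : ∀ n : ℕ, S n*((n+1)*(S n+c n*κ n)) - c n*(n*(c n-S n*κ (n-1))) = (γ:ℂ)/2)
    (k : ℕ) :
    ‖(c 0 + S 0 * I) * exp (-(I*(γ/2)*(Real.pi/2 : ℝ))) - 1‖ ≤ ((10*(1+k)+2) / 2^k) * (Real.pi/2) := by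
  have hnorm : ∀ φ : ℝ, ‖exp (I*φ)‖ = 1 := fun φ => by
    rw [mul_comm]; exact Complex.norm_exp_ofReal_mul_I φ
  have hre : ∀ φ : ℝ, (exp (I*φ)).re = Real.cos φ := fun φ => by
    rw [mul_comm]; exact Complex.exp_ofReal_mul_I_re φ
  have hre0 : ∀ φ ∈ Set.Icc 0 (Real.pi/2), 0 ≤ (exp (I*φ)).re := fun φ h => by
    rw [hre]; exact Real.cos_nonneg_of_mem_Icc ⟨by linarith [h.1, Real.pi_pos], h.2⟩
  let H : ℝ → ℂ := fun φ => pvF c S (k+1) 0 (exp (I*φ)) * exp (-(I*(γ/2)*φ))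
  have hder : ∀ φ ∈ Set.Icc 0 (Real.pi/2), ∃ W, HasDerivAt (pvF c S (k+1) 0) W (exp (I*φ)) ∧
      ‖pvE c S κ γ 0 (exp (I*φ)) (pvF c S (k+1) 0 (exp (I*φ))) W‖ ≤
        ‖1+(exp (I*φ))^2‖ / 4 * ((10*(1+k)+2) / 2^k) := by
    intro φ hφ
    obtain ⟨hZ, W, hW, hb⟩ := pv_main hc hS h1 l1 l2 hκ hG hP (hnorm φ) (hre0 φ hφ) k 1
    obtain ⟨W', hW', hb'⟩ := pv_step hc hS h1 l1 l2 hP (hnorm φ) (hre0 φ hφ) 0 hW hZ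
    refine ⟨W', hW', hb'.trans ?_⟩
    gcongr
    simpa using hb
  choose! W hW hWb using hder
  have hH : ∀ φ ∈ Set.Icc 0 (Real.pi/2), HasDerivAt H
     (I * (exp (I*φ) * W φ - γ/2 * pvF c S (k+1) 0 (exp (I*φ))) * exp (-(I*(γ/2)*φ))) φ := by
    intro φ hφ
    have d1 : HasDerivAt (fun φ : ℝ => exp (I*φ)) (exp (I*φ) * I) φ := by
      have := ((hasDerivAt_id φ).ofReal_comp.const_mul I).cexp
      simpa using this
    have d2 : HasDerivAt (fun φ : ℝ => exp (-(I*(γ/2)*φ))) (exp (-(I*(γ/2)*φ)) * (-(I*(γ/2)))) φ := by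
      have := ((hasDerivAt_id φ).ofReal_comp.const_mul (I*(γ/2))).neg.cexp
      simpa using this
    have d3 := ((hW φ hφ).comp φ d1).mul d2
    refine HasDerivAt.congr_deriv d3 ?_
    simp only [Function.comp]
    ring
  have hmv := norm_image_sub_le_of_norm_deriv_le_segment' (f := H) (a := 0) (b := Real.pi/2)
    (C := (10*(1+k)+2) / 2^k) (fun φ hφ => (hH φ hφ).hasDerivWithinAt) (by
      intro φ hφ
      have hφ' : φ ∈ Set.Icc 0 (Real.pi/2) := ⟨hφ.1, hφ.2.le⟩
      have hb := hWb φ hφ'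
      have e : pvE c S κ γ 0 (exp (I*φ)) (pvF c S (k+1) 0 (exp (I*φ))) (W φ) =
        (1+(exp (I*φ))^2) * (exp (I*φ) * W φ - γ/2 * pvF c S (k+1) 0 (exp (I*φ))) := by
        simp [pvE]; ring
      rw [e, norm_mul] at hb
      have hpos : 0 < ‖1+(exp (I*φ))^2‖ := by
        rw [norm_pos_iff]
        intro h0
        have hcos : 0 < Real.cos φ := Real.cos_pos_of_mem_Ioo ⟨by linarith [hφ.1, Real.pi_pos], hφ.2⟩
        have hi : (exp (I*φ) - I) * (exp (I*φ) + I) = 0 := by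
          linear_combination h0 - I_sq
        rcases mul_eq_zero.1 hi with h | h
        · have := congrArg Complex.re h
          simp only [Complex.sub_re, hre] at this
          simp at this; linarith
        · have := congrArg Complex.re h
          simp only [Complex.add_re, hre] at this
          simp at this; linarith
      rw [norm_mul, norm_mul]
      have : ‖exp (-(I*(γ/2)*φ))‖ = 1 := by
        have := hnorm (-(γ/2*φ))
        rw [← this]; congr 2; push_cast; ring
      rw [this, norm_I, one_mul, mul_one]
      have hb2 : ‖1+(exp (I*φ))^2‖ * ‖(exp (I*φ) * W φ - γ/2 * pvF c S (k+1) 0 (exp (I*φ)))‖ ≤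
         ‖1+(exp (I*φ))^2‖ * ((10*(1+k)+2) / 2^k) := by
        have hp2 : (0:ℝ) ≤ (10*(1+k)+2) / 2^k := by positivity
        nlinarith [mul_nonneg hpos.le hp2]
      exact le_of_mul_le_mul_left hb2 hpos)
    (Real.pi/2) ⟨by positivity, le_rfl⟩
  have hone : ∀ k m, pvF c S k m 1 = 1 := by
    intro k
    induction k with
    | zero => intro m; rfl
    | succ k ih =>
      intro m
      have hZ : pvCone 1 1 := ⟨by simp, 1, 0, by norm_num, by norm_num, by simp⟩
      have hd := pv_den (hc m) (hS m) (h1 m) (by simp) (by simp) hZ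
      have hd0 : (1:ℂ)+S m+1*c m ≠ 0 := by
        intro h; rw [h] at hd; norm_num at hd
      rw [pvF, ih, pvT, div_eq_one_iff_eq hd0]; ring
  have H0 : H 0 = 1 := by simp [H, hone]
  have hI : exp (I * (Real.pi/2 : ℝ)) = I := by
    rw [mul_comm]; push_cast; exact Complex.exp_pi_div_two_mul_I
  have H1 : H (Real.pi/2) = (c 0 + S 0 * I) * exp (-(I*(γ/2)*(Real.pi/2 : ℝ))) := by
    simp only [H]
    rw [hI]
    congr 1
    have hZ := (pv_main hc hS h1 l1 l2 hκ hG hP (s := I) (by simp) (by simp) k 1).1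
    have hd := pv_den (hc 0) (hS 0) (h1 0) (by simp) (by simp) hZ
    have hd0 : pvF c S k 1 I+S 0+I*c 0 ≠ 0 := by
      intro h; rw [h] at hd; norm_num at hd
    have h1' : (c 0:ℂ)^2+(S 0:ℂ)^2 = 1 := by exact_mod_cast h1 0
    rw [pvF, pvT, div_eq_iff hd0]
    linear_combination (-I) * h1' - S 0 * c 0 * I_sq
  rw [H0, H1] at hmv
  simpa using hmv

theorem pv_final (γ : ℝ) (hγ0 : 0 < γ) (hγ2 : γ < 2)
    (β : ℝ) (hβ : β ∈ Set.Icc 0 (Real.pi / 2))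
    {c S : ℕ → ℝ} (hc0 : c 0 = Real.cos β) (hS0 : S 0 = Real.sin β)
    (hb : ∀ k : ℕ, ‖((c 0:ℂ) + S 0 * I) * exp (-(I*(γ/2)*(Real.pi/2 : ℝ))) - 1‖ ≤ ((10*(1+k)+2) / 2^k) * (Real.pi/2)) :
    β = γ * Real.pi / 4 := by
  have hlim : Filter.Tendsto (fun k : ℕ => ((10*(1+(k:ℝ))+2) / 2^k) * (Real.pi/2)) Filter.atTop (nhds 0) := by
    have t1 : Filter.Tendsto (fun k : ℕ => (k:ℝ)^1 / 2^k) Filter.atTop (nhds 0) :=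
      tendsto_pow_const_div_const_pow_of_one_lt 1 (by norm_num)
    have t0 : Filter.Tendsto (fun k : ℕ => (k:ℝ)^0 / 2^k) Filter.atTop (nhds 0) :=
      tendsto_pow_const_div_const_pow_of_one_lt 0 (by norm_num)
    have := ((t1.const_mul 10).add (t0.const_mul 12)).mul_const (Real.pi/2)
    simp only [mul_zero, add_zero, zero_mul] at this
    refine this.congr fun k => ?_
    ring
  have h0 := ge_of_tendsto' hlim hb
  have h1 := norm_le_zero_iff.1 h0
  have h2 : exp (((β - γ*Real.pi/4 : ℝ):ℂ) * I) = 1 := by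
    rw [← sub_eq_zero, ← h1, hc0, hS0, Complex.ofReal_cos, Complex.ofReal_sin, ← Complex.exp_mul_I,
      ← Complex.exp_add]
    congr 2; push_cast; ring
  rw [Complex.exp_eq_one_iff] at h2
  obtain ⟨n, hn⟩ := h2
  have h3 : β - γ*Real.pi/4 = n * (2*Real.pi) := by
    have : ((β - γ*Real.pi/4 : ℝ):ℂ) = ((n * (2*Real.pi) : ℝ) : ℂ) := by
      apply mul_right_cancel₀ I_ne_zero
      rw [hn]; push_cast; ring
    exact_mod_cast this
  have hpi := Real.pi_pos
  have hg : 0 < γ * Real.pi := by positivity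
  have hg2 : γ * Real.pi < 2 * Real.pi := by nlinarith
  have n1 : (n:ℝ) < 1 := by
    by_contra h; push Not at h; nlinarith [hβ.2]
  have n2 : (-1:ℝ) < n := by
    by_contra h; push Not at h; nlinarith [hβ.1]
  have : n = 0 := by
    have a : n < 1 := by exact_mod_cast n1
    have b : -1 < n := by exact_mod_cast n2
    omega
  rw [this] at h3; simp at h3; linarith

/-- If a solution of the discrete Painlevé equation (P) starting at `x_0 = e^{iβ}`
stays in the closed arc `A_I = {e^{iθ} : θ ∈ [0, π/2]}`, then `β = γπ/4`. -/
theorem painleve_separatrix_unique (γ : ℝ) (hγ0 : 0 < γ) (hγ2 : γ < 2)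
    (β : ℝ) (hβ : β ∈ Set.Icc 0 (Real.pi / 2))
    (x : ℕ → ℂ) (hP : PainleveP (γ : ℂ) x)
    (hx0 : x 0 = Complex.exp (Complex.I * β))
    (harc : ∀ n : ℕ, ∃ θ : ℝ, θ ∈ Set.Icc 0 (Real.pi / 2) ∧
      x n = Complex.exp (Complex.I * θ)) :
    β = γ * Real.pi / 4 := by
  choose θ' hθ' hx' using harc
  obtain ⟨θ, hθ0, hθ, hx⟩ : ∃ θ : ℕ → ℝ, θ 0 = β ∧ (∀ n, θ n ∈ Set.Icc 0 (Real.pi/2)) ∧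
      ∀ n, x n = Complex.exp (Complex.I * θ n) := by
    refine ⟨fun n => if n = 0 then β else θ' n, by simp, fun n => ?_, fun n => ?_⟩
    · by_cases h : n = 0 <;> simp only [h, if_true, if_false]
      · exact hβ
      · exact hθ' n
    · by_cases h : n = 0
      · subst h; simpa using hx0
      · simpa [h] using hx' n
  let c : ℕ → ℝ := fun n => Real.cos (θ n)
  let S : ℕ → ℝ := fun n => Real.sin (θ n)
  have hc : ∀ n, 0 ≤ c n := fun n => Real.cos_nonneg_of_mem_Icc
    ⟨by linarith [(hθ n).1, Real.pi_pos], (hθ n).2⟩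
  have hS : ∀ n, 0 ≤ S n := fun n => Real.sin_nonneg_of_mem_Icc
    ⟨(hθ n).1, by linarith [(hθ n).2, Real.pi_pos]⟩
  have h1 : ∀ n, c n^2+S n^2 = 1 := fun n => Real.cos_sq_add_sin_sq _
  have h1c : ∀ n, (c n:ℂ)^2+(S n:ℂ)^2 = 1 := fun n => by exact_mod_cast h1 n
  have hxc : ∀ n, x n = c n + S n * I := fun n => by
    rw [hx n, mul_comm, Complex.exp_mul_I]; simp [c, S]
  have hden : ∀ n, I + x n * x (n+1) ≠ 0 := fun n => (hP n).1
  let κ : ℕ → ℂ := fun n => I * (x n * x (n+1) - I) / (I + x n * x (n+1))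
  have hκe : ∀ n, κ n * (I + x n * x (n+1)) = I * (x n * x (n+1) - I) := fun n =>
    div_mul_cancel₀ _ (hden n)
  have l1 : ∀ n, (S n:ℂ) + c n * κ n = c (n+1) - S (n+1) * κ n := by
    intro n
    apply mul_right_cancel₀ (hden n)
    have e := hκe n
    have a := h1c n
    have b := h1c (n+1)
    have : ((S n:ℂ) + c n * κ n - (c (n+1) - S (n+1) * κ n)) * (I + x n * x (n+1)) = 0 := by
      have : ((S n:ℂ) + c n * κ n - (c (n+1) - S (n+1) * κ n)) * (I + x n * x (n+1)) =
        (S n - c (n+1)) * (I + x n * x (n+1)) + (c n + S (n+1)) * (I * (x n * x (n+1) - I)) := by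
        linear_combination (c n + S (n+1)) * e
      rw [this, hxc, hxc]
      have := I_sq
      grind
    linear_combination this
  have l2 : ∀ n, (c n:ℂ) - S n * κ n = c (n+1) * κ n + S (n+1) := by
    intro n
    apply mul_right_cancel₀ (hden n)
    have e := hκe n
    have a := h1c n
    have b := h1c (n+1)
    have : ((c n:ℂ) - S n * κ n - (c (n+1) * κ n + S (n+1))) * (I + x n * x (n+1)) = 0 := by
      have : ((c n:ℂ) - S n * κ n - (c (n+1) * κ n + S (n+1))) * (I + x n * x (n+1)) =
        (c n - S (n+1)) * (I + x n * x (n+1)) - (S n + c (n+1)) * (I * (x n * x (n+1) - I)) := by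
        linear_combination (-(S n + c (n+1) : ℂ)) * e
      rw [this, hxc, hxc]
      have := I_sq
      grind
    linear_combination this
  have hκ : ∀ n, ‖κ n‖ ≤ 1 := by
    intro n
    simp only [κ]
    rw [norm_div, norm_mul, norm_I, one_mul, div_le_one (norm_pos_iff.2 (hden n))]
    have him : 0 ≤ (x n * x (n+1)).im := by
      rw [hxc, hxc]; simp
      have := mul_nonneg (hc n) (hS (n+1))
      have := mul_nonneg (hS n) (hc (n+1))
      linarith
    apply (pow_le_pow_iff_left₀ (norm_nonneg _) (norm_nonneg _) two_ne_zero).1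
    rw [Complex.sq_norm, Complex.sq_norm, Complex.normSq_apply, Complex.normSq_apply]
    simp only [Complex.sub_re, Complex.sub_im, Complex.add_re, Complex.add_im, Complex.I_re, Complex.I_im]
    nlinarith
  have r1 : ∀ n, (x (n+1) - I * x n) / (I + x n * x (n+1)) = -I * (S n + c n * κ n) := by
    intro n
    rw [div_eq_iff (hden n)]
    have e := hκe n
    have : -I * (S n + c n * κ n) * (I + x n * x (n+1)) =
      -I * (S n * (I + x n * x (n+1)) + c n * (I * (x n * x (n+1) - I))) := by
      linear_combination (-I * c n) * e
    rw [this]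
    have a := h1c n
    have := I_sq
    rw [hxc n]
    grind
  have r2 : ∀ n, (x n + I * x (n+1)) / (I + x n * x (n+1)) = c (n+1) - S (n+1) * κ n := by
    intro n
    rw [div_eq_iff (hden n)]
    have e := hκe n
    have : (c (n+1) - S (n+1) * κ n) * (I + x n * x (n+1)) =
      c (n+1) * (I + x n * x (n+1)) - S (n+1) * (I * (x n * x (n+1) - I)) := by
      linear_combination (-(S (n+1):ℂ)) * e
    rw [this]
    have a := h1c (n+1)
    have := I_sq
    rw [hxc (n+1)]
    grind
  have hPP : ∀ n : ℕ, S n*((n+1)*(S n+c n*κ n)) - c n*(n*(c n-S n*κ (n-1))) = (γ:ℂ)/2 := by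
    intro n
    have h := (hP n).2.2
    rw [r1] at h
    have hx0 : x n ≠ 0 := by rw [hx]; exact Complex.exp_ne_zero _
    have m1 : x n^2 - 1 = 2*I*S n * x n := by
      rw [hxc]; have := h1c n; have := I_sq; grind
    have m2 : x n^2 + 1 = 2*c n * x n := by
      rw [hxc]; have := h1c n; have := I_sq; grind
    have h' : (n:ℂ) * ((x (n-1) + I * x n) / (I + x (n-1) * x n)) = n * (c n - S n * κ (n-1)) := by
      cases n with
      | zero => simp
      | succ n => simp only [Nat.add_sub_cancel]; rw [r2]
    rw [m1] at h
    have h2 : ((n:ℂ)+1) * (2*I*S n * x n) * (-I * (S n + c n * κ n)) - (2*c n * x n) * (n * (c n - S n * κ (n-1))) = γ * x n := by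
      rw [← h', ← h, ← m2]; ring
    apply mul_right_cancel₀ hx0
    linear_combination (1/2) * h2 + (n+1) * S n * x n * (S n + c n * κ n) * I_sq
  have hG : ‖(γ:ℂ)‖ ≤ 2 := by
    rw [Complex.norm_real, Real.norm_of_nonneg hγ0.le]; exact hγ2.le
  exact pv_final γ hγ0 hγ2 β hβ (c := c) (S := S) (by simp [c, hθ0]) (by simp [S, hθ0])
    (pv_bound hc hS h1 l1 l2 hκ hG hPP)

end
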